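/- Let {S_n}_{n≥0} be a positive real sequence satisfying S_n = a(n)S_{n−1} + b(n)S_{n−2} for n ≥ 2, where a, b are real-valued functions, with c_0, c_1, c_2, c_3 defined from a and b as in the accompanying context. Then for every integer n ≥ 1, (S_n^2 − S_{n−1}S_{n+1})(S_{n+2}^2 − S_{n+1}S_{n+3}) − (S_{n+1}^2 − S_n S_{n+2})^2 = S_{n+1}·S_{n−1}^3·[c_3(n)(S_n/S_{n−1})^3 + c_2(n)(S_n/S_{n−1})^2 + c_1(n)(S_n/S_{n−1}) + c_0(n)]. -/

import Mathlib

/-- `c_0(n)` associated to a three-term recurrence with coefficients `a`, `b`. -/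
noncomputable def c0 (a b : ℕ → ℝ) (n : ℕ) : ℝ :=
  -(b (n+1)) ^ 2 * (a (n+2) ^ 2 + b (n+1) - a (n+2) * a (n+3) - b (n+3))

/-- `c_1(n)` associated to a three-term recurrence with coefficients `a`, `b`. -/
noncomputable def c1 (a b : ℕ → ℝ) (n : ℕ) : ℝ :=
  b (n+1) * (2 * a (n+2) * b (n+1) + 2 * a (n+3) * a (n+2) * a (n+1)
    + a (n+3) * b (n+2) + 2 * a (n+1) * b (n+3) - 2 * a (n+2) ^ 2 * a (n+1)
    - 2 * a (n+2) * b (n+2) - 3 * a (n+1) * b (n+1))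

/-- `c_2(n)` associated to a three-term recurrence with coefficients `a`, `b`. -/
noncomputable def c2 (a b : ℕ → ℝ) (n : ℕ) : ℝ :=
  4 * a (n+1) * a (n+2) * b (n+1) + 2 * b (n+1) * b (n+2)
    + a (n+1) ^ 2 * a (n+2) * a (n+3) + a (n+1) * a (n+3) * b (n+2)
    + a (n+1) ^ 2 * b (n+3) - 3 * a (n+1) ^ 2 * b (n+1)
    - a (n+3) * a (n+2) * b (n+1) - a (n+2) ^ 2 * a (n+1) ^ 2
    - b (n+3) * b (n+1) - 2 * a (n+2) * a (n+1) * b (n+2) - b (n+2) ^ 2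

/-- `c_3(n)` associated to a three-term recurrence with coefficients `a`, `b`. -/
noncomputable def c3 (a b : ℕ → ℝ) (n : ℕ) : ℝ :=
  2 * a (n+1) ^ 2 * a (n+2) + 2 * a (n+1) * b (n+2) - a (n+1) * b (n+3)
    - a (n+1) ^ 3 - a (n+1) * a (n+2) * a (n+3) - a (n+3) * b (n+2)

/-- The key algebraic identity behind the log-convexity criterion for
`{S_n^2 - S_{n-1} S_{n+1}}`. -/
theorem stmt_15 (S a b : ℕ → ℝ) (hpos : ∀ n, 0 < S n)
    (hrec : ∀ n : ℕ, 2 ≤ n → S n = a n * S (n - 1) + b n * S (n - 2)) :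
    ∀ n : ℕ, 1 ≤ n →
      (S n ^ 2 - S (n - 1) * S (n + 1)) * (S (n + 2) ^ 2 - S (n + 1) * S (n + 3))
          - (S (n + 1) ^ 2 - S n * S (n + 2)) ^ 2 =
        S (n + 1) * S (n - 1) ^ 3 *
          (c3 a b n * (S n / S (n - 1)) ^ 3 + c2 a b n * (S n / S (n - 1)) ^ 2
            + c1 a b n * (S n / S (n - 1)) + c0 a b n) := by
  intro n hn
  -- Shift the index so that no truncated subtraction remains.
  obtain ⟨m, rfl⟩ : ∃ m, n = m + 1 := ⟨n - 1, by omega⟩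
  have h2 : S (m + 2) = a (m + 2) * S (m + 1) + b (m + 2) * S m := hrec (m + 2) (by omega)
  have h3 : S (m + 3) = a (m + 3) * S (m + 2) + b (m + 3) * S (m + 1) :=
    hrec (m + 3) (by omega)
  have h4 : S (m + 4) = a (m + 4) * S (m + 3) + b (m + 4) * S (m + 2) :=
    hrec (m + 4) (by omega)
  have hx : S m ≠ 0 := (hpos m).ne'
  simp only [c0, c1, c2, c3, Nat.add_sub_cancel, Nat.add_assoc, Nat.reduceAdd]
  -- Everything becomes a rational function of `S m` and `S (m + 1)`.
  rw [h4, h3, h2]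
  field_simp
  ring
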